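/- Let π† be a probability measure on A, let θ : D → ℝ be bounded measurable, let B ⊆ D be measurable with (π†·Q)(B) > 0, and for y ∈ ℝ define θ_y(d) := θ(d)·1_{Bᶜ}(d) + y·1_B(d). Set γ := (1/(π†·Q)(B)) · ∫_{A×B} Φ(a) d(π†⊙Q)(a,d). Then for all y, z ∈ ℝ: Er(θ_y, π†) − Er(θ_z, π†) = [ (y − γ)² − (z − γ)² ] · (π†·Q)(B). -/

import Mathlib

open MeasureTheory ProbabilityTheory

/-- The joint distribution `π ⊙ Q` of `(a, d)` where `a ∼ π` and `d ∼ Q a`. -/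
noncomputable def jointM {A D : Type*} [MeasurableSpace A] [MeasurableSpace D]
    (π : Measure A) (Q : Kernel A D) : Measure (A × D) :=
  π.compProd Q

/-- The data distribution `π · Q`, the marginal of `π ⊙ Q` on `D` (equivalently `π.bind Q`). -/
noncomputable def dataM {A D : Type*} [MeasurableSpace A] [MeasurableSpace D]
    (π : Measure A) (Q : Kernel A D) : Measure D :=
  π.bind (fun a => Q a)

/-- The Bayes risk `Er(θ, π)` of an estimator `θ` for the quantity of interest `Φ`
under the prior `π`, for the quadratic loss. -/
noncomputable def bayesRisk {A D : Type*} [MeasurableSpace A] [MeasurableSpace D]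
    (Q : Kernel A D) (Φ : A → ℝ) (θ : D → ℝ) (π : Measure A) : ℝ :=
  ∫ p, (θ p.2 - Φ p.1) ^ 2 ∂(jointM π Q)

/-- `Θ(π)`: the set of bounded measurable functions `θ : D → ℝ` which are versions of the
conditional expectation of `(a, d) ↦ Φ a` given the second coordinate, under `π ⊙ Q`. -/
def Posterior {A D : Type*} [MeasurableSpace A] [MeasurableSpace D]
    (Q : Kernel A D) (Φ : A → ℝ) (π : Measure A) : Set (D → ℝ) :=
  {θ | Measurable θ ∧ (∃ C, ∀ d, |θ d| ≤ C) ∧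
    ∀ B : Set D, MeasurableSet B →
      ∫ p in Set.univ ×ˢ B, Φ p.1 ∂(jointM π Q) = ∫ d in B, θ d ∂(dataM π Q)}

/-- **Risk difference of modified estimators.** For `θ_y := θ·1_{Bᶜ} + y·1_B` with
`(π†·Q)(B) > 0` and `γ := E_{π†⊙Q}[Φ | d ∈ B]`, one has
`Er(θ_y, π†) − Er(θ_z, π†) = ((y − γ)² − (z − γ)²)·(π†·Q)(B)`. -/
theorem risk_difference_of_modified_estimators
    {A D : Type*} [MeasurableSpace A] [MeasurableSpace D] [Nonempty A] [Nonempty D]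
    (Q : Kernel A D) [IsMarkovKernel Q]
    (Φ : A → ℝ) (hΦm : Measurable Φ) (hΦb : ∃ C, ∀ a, |Φ a| ≤ C)
    (πd : Measure A) [IsProbabilityMeasure πd]
    (θ : D → ℝ) (hθm : Measurable θ) (hθb : ∃ C, ∀ d, |θ d| ≤ C)
    (B : Set D) (hB : MeasurableSet B) (hBpos : 0 < dataM πd Q B)
    (γ : ℝ)
    (hγ : γ = (1 / (dataM πd Q B).toReal) * ∫ p in Set.univ ×ˢ B, Φ p.1 ∂(jointM πd Q)) :
    ∀ y z : ℝ,
      bayesRisk Q Φ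
          (fun d => θ d * Bᶜ.indicator (fun _ => (1 : ℝ)) d
            + y * B.indicator (fun _ => (1 : ℝ)) d) πd
        - bayesRisk Q Φ
          (fun d => θ d * Bᶜ.indicator (fun _ => (1 : ℝ)) d
            + z * B.indicator (fun _ => (1 : ℝ)) d) πd
      = ((y - γ) ^ 2 - (z - γ) ^ 2) * (dataM πd Q B).toReal := by
  intro y z
  obtain ⟨C, hC⟩ := hΦb
  obtain ⟨K, hK⟩ := hθb
  have hS : MeasurableSet ((Set.univ : Set A) ×ˢ B) := MeasurableSet.univ.prod hB
  have : IsProbabilityMeasure (jointM πd Q) := by unfold jointM; infer_instance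
  have hm : jointM πd Q (Set.univ ×ˢ B) = dataM πd Q B := by
    unfold jointM dataM
    rw [Measure.compProd_apply hS, Measure.bind_apply hB Q.measurable.aemeasurable]
    simp [Set.preimage]
  have hI : ∀ w : ℝ, Integrable (fun p : A × D =>
      ((θ p.2 * Bᶜ.indicator (fun _ => (1 : ℝ)) p.2
        + w * B.indicator (fun _ => (1 : ℝ)) p.2) - Φ p.1) ^ 2) (jointM πd Q) := by
    intro w
    have hmeas : Measurable (fun p : A × D =>
      ((θ p.2 * Bᶜ.indicator (fun _ => (1 : ℝ)) p.2
        + w * B.indicator (fun _ => (1 : ℝ)) p.2) - Φ p.1) ^ 2) := by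
      have h1 : Measurable (Bᶜ.indicator (fun _ => (1 : ℝ))) :=
        measurable_const.indicator hB.compl
      have h2 : Measurable (B.indicator (fun _ => (1 : ℝ))) :=
        measurable_const.indicator hB
      fun_prop
    refine Integrable.of_bound hmeas.aestronglyMeasurable ((K + |w| + C) ^ 2)
      (Filter.Eventually.of_forall fun p => ?_)
    rw [Real.norm_eq_abs, abs_pow]
    have h1 := hC p.1
    have h2 := hK p.2
    have h3 := abs_nonneg (θ p.2)
    have h4 := abs_nonneg w
    refine pow_le_pow_left₀ (abs_nonneg _) ?_ 2
    refine (abs_sub _ _).trans ?_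
    by_cases hp : p.2 ∈ B
    · simp [hp]; linarith
    · simp [hp]; linarith
  have hΦi : Integrable (fun p : A × D => Φ p.1) (jointM πd Q) :=
    Integrable.of_bound (hΦm.comp measurable_fst).aestronglyMeasurable C
      (Filter.Eventually.of_forall fun p => hC p.1)
  have hfin : dataM πd Q B ≠ ⊤ := hm ▸ measure_ne_top _ _
  have hpos : 0 < (dataM πd Q B).toReal := ENNReal.toReal_pos hBpos.ne' hfin
  have hint : ∫ p in Set.univ ×ˢ B, Φ p.1 ∂(jointM πd Q) = γ * (dataM πd Q B).toReal := by
    rw [hγ]; field_simp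
  unfold _root_.bayesRisk
  rw [← integral_sub (hI y) (hI z)]
  have heq : (fun p : A × D =>
      ((θ p.2 * Bᶜ.indicator (fun _ => (1 : ℝ)) p.2
        + y * B.indicator (fun _ => (1 : ℝ)) p.2) - Φ p.1) ^ 2
      - ((θ p.2 * Bᶜ.indicator (fun _ => (1 : ℝ)) p.2
        + z * B.indicator (fun _ => (1 : ℝ)) p.2) - Φ p.1) ^ 2)
      = ((Set.univ : Set A) ×ˢ B).indicator
        (fun p => (y ^ 2 - z ^ 2) - (2 * (y - z)) * Φ p.1) := by
    funext p
    by_cases hp : p.2 ∈ B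
    · simp [hp]; ring
    · simp [hp]
  rw [heq, integral_indicator hS, integral_sub (integrable_const _)
    (hΦi.integrableOn.const_mul _), integral_const_mul, hint, setIntegral_const,
    Measure.real, hm, smul_eq_mul]
  ring
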